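/- Completeness of the or-to-plus method (Theorem 1): Let P = (τ_stem, τ_loop) be a linear lasso program over ℝⁿ such that the relational composition τ_stem ∘ τ_loop is nonempty (i.e., there exist x₀, x₁, x₂ ∈ ℝⁿ with (x₀,x₁) ∈ τ_stem and (x₁,x₂) ∈ τ_loop). If there exist r̊ ∈ ℝⁿ, r̊₀ ∈ ℝ, s̊ ∈ ℝⁿ, s̊₀ ∈ ℝ such that f(x) = r̊ᵀx + r̊₀ is a linear ranking function with linear supporting invariant I(x) ≡ s̊ᵀx + s̊₀ ≥ 0 for P and this invariant is non-decreasing, then there exist r ∈ ℝⁿ, r₀ ∈ ℝ, s ∈ ℝⁿ, s₀ ∈ ℝ satisfying the or-to-plus constraints (φ1), (φ2), (φ3), (φ4) for P. -/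

import Mathlib

open Matrix

theorem farkas_aux {V : Type*} [AddCommGroup V] [Module ℝ V] : ∀ (m : ℕ) (a : Fin m → (V →ₗ[ℝ] ℝ))
    (h : V →ₗ[ℝ] ℝ), (∀ x, (∀ i, 0 ≤ a i x) → 0 ≤ h x) →
    ∃ l : Fin m → ℝ, (∀ i, 0 ≤ l i) ∧ ∀ x, h x = ∑ i, l i * a i x := by
  intro m
  induction m with
  | zero =>
    intro a h H
    refine ⟨fun _ => 0, fun _ => le_rfl, fun x => ?_⟩
    have h1 := H x (fun i => i.elim0)
    have h2 := H (-x) (fun i => i.elim0)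
    rw [map_neg] at h2
    simp
    linarith
  | succ m ih =>
    intro a h H
    by_cases hc : ∀ x, (∀ i : Fin m, 0 ≤ a i.succ x) → 0 ≤ h x
    · obtain ⟨l, hl, hx⟩ := ih (fun i => a i.succ) h hc
      refine ⟨Fin.cons 0 l, fun i => ?_, fun x => ?_⟩
      · refine Fin.cases ?_ (fun j => ?_) i
        · simp
        · simpa using hl j
      · rw [Fin.sum_univ_succ]
        simpa using hx x
    · push Not at hc
      obtain ⟨z, hz, hhz⟩ := hc
      have ha0 : a 0 z < 0 := by
        by_contra hcon
        push Not at hcon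
        have := H z (fun i => Fin.cases hcon hz i)
        linarith
      obtain ⟨y, hy, hhy, hy0⟩ : ∃ y, (∀ i : Fin m, 0 ≤ a i.succ y) ∧ h y < 0 ∧ a 0 y = -1 := by
        have hp : 0 < (-(a 0 z))⁻¹ := inv_pos.mpr (by linarith)
        refine ⟨(-(a 0 z))⁻¹ • z, fun i => ?_, ?_, ?_⟩
        · rw [map_smul, smul_eq_mul]; exact mul_nonneg hp.le (hz i)
        · rw [map_smul, smul_eq_mul]; exact mul_neg_of_pos_of_neg hp hhz
        · rw [map_smul, smul_eq_mul]
          have := ha0.ne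
          field_simp
      let T : V →ₗ[ℝ] V := LinearMap.id + (a 0).smulRight y
      have hT : ∀ x, T x = x + a 0 x • y := fun x => by simp [T]
      obtain ⟨l, hl, hx⟩ := ih (fun i => (a i.succ).comp T) (h.comp T) (by
        intro x hx
        refine H (T x) (fun i => Fin.cases ?_ hx i)
        rw [hT, map_add, map_smul, hy0, smul_eq_mul]
        linarith)
      refine ⟨Fin.cons (∑ i, l i * a i.succ y - h y) l, fun i => ?_, fun x => ?_⟩
      · refine Fin.cases ?_ (fun j => ?_) i
        · have : 0 ≤ ∑ i, l i * a i.succ y := Finset.sum_nonneg (fun i _ => mul_nonneg (hl i) (hy i))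
          simp
          linarith
        · simpa using hl j
      · rw [Fin.sum_univ_succ]
        have h1 := hx x
        simp only [LinearMap.comp_apply, hT, map_add, map_smul, smul_eq_mul, mul_add,
          Finset.sum_add_distrib] at h1
        have h2 : ∑ i, l i * (a 0 x * a i.succ y) = a 0 x * ∑ i, l i * a i.succ y := by
          rw [Finset.mul_sum]
          exact Finset.sum_congr rfl (fun i _ => by ring)
        rw [h2] at h1
        simp only [Fin.cons_zero, Fin.cons_succ]
        linarith

theorem affine_farkas {V : Type*} [AddCommGroup V] [Module ℝ V] (m : ℕ) (a : Fin m → (V →ₗ[ℝ] ℝ))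
    (b : Fin m → ℝ) (g h : V →ₗ[ℝ] ℝ) (g0 h0 : ℝ) (p : V) (hp : ∀ i, a i p ≤ b i)
    (hgp : 0 ≤ g p + g0)
    (H : ∀ x, 0 ≤ g x + g0 → (∀ i, a i x ≤ b i) → 0 ≤ h x + h0) :
    ∃ μ : ℝ, 0 ≤ μ ∧ ∀ x, (∀ i, a i x ≤ b i) → μ * (g x + g0) ≤ h x + h0 := by
  let F : (V →ₗ[ℝ] ℝ) → ℝ → (V × ℝ →ₗ[ℝ] ℝ) := fun f c =>
    f.comp (LinearMap.fst ℝ V ℝ) + c • LinearMap.snd ℝ V ℝ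
  have hF : ∀ f c x t, F f c (x, t) = f x + c * t := fun f c x t => by simp [F]
  obtain ⟨l, hl, hx⟩ := farkas_aux (m + 2)
    (Fin.cons (F g g0) (Fin.cons (F 0 1) (fun i => F (-(a i)) (b i)))) (F h h0) (by
      rintro ⟨x, t⟩ hx
      have e1 := hx 0
      have e2 := hx (Fin.succ 0)
      have e3 : ∀ i : Fin m, _ := fun i => hx i.succ.succ
      simp only [Fin.cons_zero, Fin.cons_succ, hF, LinearMap.zero_apply, LinearMap.neg_apply,
        one_mul, zero_add] at e1 e2 e3
      rw [hF]
      rcases e2.eq_or_lt with ht | ht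
      · subst ht
        simp only [mul_zero, add_zero] at e1 e3 ⊢
        by_contra hcon
        push Not at hcon
        obtain ⟨k, hk⟩ := exists_nat_gt ((h p + h0) / (-(h x)))
        rw [div_lt_iff₀ (by linarith)] at hk
        have hk0 : (0 : ℝ) ≤ k := Nat.cast_nonneg k
        have := H (p + (k : ℝ) • x) (by
          rw [map_add, map_smul, smul_eq_mul]
          have := mul_nonneg hk0 e1
          linarith) (fun i => by
          rw [map_add, map_smul, smul_eq_mul]
          have := mul_nonneg hk0 (e3 i)
          have := hp i
          linarith)
        rw [map_add, map_smul, smul_eq_mul] at this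
        linarith
      · have hti : 0 < t⁻¹ := inv_pos.mpr ht
        have htt : t⁻¹ * t = 1 := inv_mul_cancel₀ ht.ne'
        have := H (t⁻¹ • x) (by
          rw [map_smul, smul_eq_mul]
          have := mul_nonneg hti.le e1
          linear_combination this + g0 * htt) (fun i => by
          rw [map_smul, smul_eq_mul]
          have := mul_nonneg hti.le (e3 i)
          linear_combination this + b i * htt)
        rw [map_smul, smul_eq_mul] at this
        have := mul_nonneg ht.le this
        linear_combination this + h x * htt)
  refine ⟨l 0, hl 0, fun x hax => ?_⟩
  have h1 := hx (x, 1)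
  rw [Fin.sum_univ_succ, Fin.sum_univ_succ] at h1
  simp only [Fin.cons_zero, Fin.cons_succ, hF, LinearMap.zero_apply, LinearMap.neg_apply,
        mul_one, zero_add] at h1
  have h2 : 0 ≤ ∑ i : Fin m, l i.succ.succ * (-(a i x) + b i) :=
    Finset.sum_nonneg (fun i _ => mul_nonneg (hl _) (by have := hax i; linarith))
  have h3 := hl (Fin.succ 0)
  linarith

/-- Completeness of the or-to-plus method (Theorem 1). -/
theorem or_to_plus_completeness {n ms ml : ℕ}
    (Astem : Matrix (Fin ms) (Fin (n + n)) ℝ) (bstem : Fin ms → ℝ)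
    (Aloop : Matrix (Fin ml) (Fin (n + n)) ℝ) (bloop : Fin ml → ℝ)
    (τstem τloop : (Fin n → ℝ) → (Fin n → ℝ) → Prop)
    (hstem : ∀ x x', τstem x x' ↔ Astem.mulVec (Fin.append x x') ≤ bstem)
    (hloop : ∀ x x', τloop x x' ↔ Aloop.mulVec (Fin.append x x') ≤ bloop)
    (hne : ∃ x₀ x₁ x₂, τstem x₀ x₁ ∧ τloop x₁ x₂)
    (rhat : Fin n → ℝ) (rhat₀ : ℝ) (shat : Fin n → ℝ) (shat₀ : ℝ)
    (hinvStem : ∀ x x', τstem x x' → shat ⬝ᵥ x' + shat₀ ≥ 0)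
    (hinvLoop : ∀ x x', shat ⬝ᵥ x + shat₀ ≥ 0 → τloop x x' → shat ⬝ᵥ x' + shat₀ ≥ 0)
    (hrkDecr : ∃ δ > (0 : ℝ), ∀ x x', shat ⬝ᵥ x + shat₀ ≥ 0 → τloop x x' →
      rhat ⬝ᵥ x - rhat ⬝ᵥ x' ≥ δ)
    (hrkBound : ∀ x x', shat ⬝ᵥ x + shat₀ ≥ 0 → τloop x x' → rhat ⬝ᵥ x + rhat₀ ≥ 0)
    (hnondecr : ∀ x x', τloop x x' → shat ⬝ᵥ x' ≥ shat ⬝ᵥ x) :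
    ∃ (r : Fin n → ℝ) (r₀ : ℝ) (s : Fin n → ℝ) (s₀ : ℝ),
      (∀ x x', τstem x x' → s ⬝ᵥ x' + s₀ ≥ 0) ∧
      (∀ x x', τloop x x' → s ⬝ᵥ x' - s ⬝ᵥ x ≥ 0) ∧
      (∃ δ > (0 : ℝ), ∀ x x', τloop x x' →
        r ⬝ᵥ x - r ⬝ᵥ x' - s ⬝ᵥ x - s₀ ≥ δ) ∧
      (∀ x x', τloop x x' → r ⬝ᵥ x + r₀ ≥ 0) := by
  obtain ⟨x₀, x₁, x₂, hs, hlp⟩ := hne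
  obtain ⟨δ, hδ, hdec⟩ := hrkDecr
  let W := (Fin n → ℝ) × (Fin n → ℝ)
  let D : (Fin n → ℝ) → ((Fin n → ℝ) →ₗ[ℝ] ℝ) := fun v => dotProductBilin ℝ ℝ v
  have hD : ∀ v x, D v x = v ⬝ᵥ x := fun v x => rfl
  let A : Fin ml → (W →ₗ[ℝ] ℝ) := fun i =>
    (D (fun j => Aloop i (Fin.castAdd n j))).comp (LinearMap.fst ℝ _ _) +
    (D (fun j => Aloop i (Fin.natAdd n j))).comp (LinearMap.snd ℝ _ _)
  have hA : ∀ x x', τloop x x' ↔ ∀ i, A i (x, x') ≤ bloop i := by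
    intro x x'
    rw [hloop, Pi.le_def]
    refine forall_congr' (fun i => ?_)
    have : A i (x, x') = (Aloop *ᵥ Fin.append x x') i := by
      simp only [Matrix.mulVec, dotProduct, Fin.sum_univ_add, Fin.append_left, Fin.append_right]
      rfl
    rw [this]
  let G : W →ₗ[ℝ] ℝ := (D shat).comp (LinearMap.fst ℝ _ _)
  let R : W →ₗ[ℝ] ℝ := (D rhat).comp (LinearMap.fst ℝ _ _)
  let R' : W →ₗ[ℝ] ℝ := (D rhat).comp (LinearMap.snd ℝ _ _)
  have hp := (hA _ _).1 hlp
  have hg : 0 ≤ G (x₁, x₂) + shat₀ := hinvStem _ _ hs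
  obtain ⟨μ, hμ, h1⟩ := affine_farkas ml A bloop G (R - R') shat₀ (-δ) (x₁, x₂) hp hg (by
    rintro ⟨x, x'⟩ hx ha
    have := hdec x x' hx ((hA _ _).2 ha)
    change 0 ≤ rhat ⬝ᵥ x - rhat ⬝ᵥ x' + -δ
    linarith)
  obtain ⟨ν, hν, h2⟩ := affine_farkas ml A bloop G R shat₀ rhat₀ (x₁, x₂) hp hg (by
    rintro ⟨x, x'⟩ hx ha
    exact hrkBound x x' hx ((hA _ _).2 ha))
  refine ⟨rhat - ν • shat, rhat₀ - ν * shat₀, μ • shat, μ * shat₀, ?_, ?_, ⟨δ, hδ, ?_⟩, ?_⟩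
  · intro x x' h
    have := mul_nonneg hμ (hinvStem x x' h)
    rw [smul_dotProduct, smul_eq_mul]
    linarith
  · intro x x' h
    have := mul_le_mul_of_nonneg_left (hnondecr x x' h) hμ
    simp only [smul_dotProduct, smul_eq_mul]
    linarith
  · intro x x' h
    have e1 := mul_le_mul_of_nonneg_left (hnondecr x x' h) hν
    have e2 : μ * (shat ⬝ᵥ x + shat₀) ≤ rhat ⬝ᵥ x - rhat ⬝ᵥ x' + -δ := h1 (x, x') ((hA _ _).1 h)
    simp only [sub_dotProduct, smul_dotProduct, smul_eq_mul]
    linarith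
  · intro x x' h
    have e2 : ν * (shat ⬝ᵥ x + shat₀) ≤ rhat ⬝ᵥ x + rhat₀ := h2 (x, x') ((hA _ _).1 h)
    simp only [sub_dotProduct, smul_dotProduct, smul_eq_mul]
    linarith
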